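/- Under the feature and core-state assumptions, if λ† ∈ Λ is a maximizer of CoreLP and π† ∈ Δ_𝒜 is defined by π†(a) = λ†_{s₀a}, then v*(s₀) − Σ_{a∈𝒜} π†(a)·q*(s₀,a) ≤ 20γ·ε_approx/(1−γ). -/

import Mathlib

/-!
Write `s_p` and `a` for the state and action of an index `p` of `λ`, and let `β = v* − q* ≥ 0`.
The linear functional `ρ_λ(w) = w(s₀) + λᵀW(γP − E)w` vanishes on the span of the features exactly
when `λ` satisfies the CoreLP constraint, and for every `λ`
`∑_p λ_p β(s_p, a) = v*(s₀) − λᵀWr − ρ_λ(v*)`.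

Apply this identity to the maximizer `λ†` and to a feasible `λ` supported on greedy actions, for
which the left-hand side is zero: comparing objective values bounds the loss at `s₀` by
`ρ_λ(v*) − ρ_λ†(v*)`. For feasible `λ` the constant feature forces `∑_p λ_p = 1 / (1 − γ)`, so
`|ρ_λ(v*)| = |ρ_λ(v* − Φθ)| ≤ 2γ‖v* − Φθ‖_∞ / (1 − γ)` for every `θ`.

A feasible greedy `λ` exists because the features, being conical combinations of the core features,
turn one transition followed by `Z` into a stochastic matrix `K` on the core states; the weights on
the core states then solve `x (1 − γK) = b` with `b ≥ 0`, and the Neumann series makes `x ≥ 0`.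
-/

open scoped BigOperators

namespace MDPPlan

variable {S A : Type} [Fintype S] [Fintype A] [DecidableEq S] {d m : ℕ}

/-- `φ_sᵀθ`: dot product of the feature vector of state `s` with weights `θ`. -/
noncomputable def phiDot (Φ : S → Fin d → ℝ) (θ : Fin d → ℝ) (s : S) : ℝ :=
  ∑ j, Φ s j * θ j

/-- The sequence `𝒮₊ = (s₀, s₁, …, s_m)`: `none` is the planning state `s₀`,
`some i` is the `i`-th core state. -/
def splus (s₀ : S) (c : Fin m → S) : Option (Fin m) → S := fun o => o.elim s₀ c

/-- State-transition matrix `P_π` of a stationary policy `π`. -/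
noncomputable def Ppi (P : S → A → S → ℝ) (π : S → A → ℝ) : Matrix S S ℝ :=
  Matrix.of fun s s' => ∑ a, π s a * P s a s'

/-- Expected reward `r_π` of a stationary policy `π`. -/
noncomputable def rpi (r : S → A → ℝ) (π : S → A → ℝ) : S → ℝ :=
  fun s => ∑ a, π s a * r s a

/-- `π` is a stationary policy: each `π(·|s)` is a probability distribution over actions. -/
def IsPolicy (π : S → A → ℝ) : Prop := (∀ s a, 0 ≤ π s a) ∧ ∀ s, ∑ a, π s a = 1

/-- Value function `v_π = Σ_{t≥0} (γ P_π)^t r_π`. -/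
noncomputable def vpi (γ : ℝ) (P : S → A → S → ℝ) (r : S → A → ℝ) (π : S → A → ℝ) :
    S → ℝ :=
  ∑' t : ℕ, ((γ • Ppi P π) ^ t).mulVec (rpi r π)

/-- Optimal value function `v*(s) = sup_π v_π(s)`. -/
noncomputable def vstar (γ : ℝ) (P : S → A → S → ℝ) (r : S → A → ℝ) : S → ℝ :=
  fun s => ⨆ π : {π : S → A → ℝ // IsPolicy π}, vpi γ P r π.1 s

/-- Optimal action-value function `q*(s,a) = r_{sa} + γ P_{sa} v*`. -/
noncomputable def qstar (γ : ℝ) (P : S → A → S → ℝ) (r : S → A → ℝ) (s : S) (a : A) : ℝ :=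
  r s a + γ * ∑ s', P s a s' * vstar γ P r s'

/-- `ε_approx = inf_θ max_s |v*(s) − φ_sᵀθ|`. -/
noncomputable def epsApprox (Φ : S → Fin d → ℝ) (v : S → ℝ) : ℝ :=
  ⨅ θ : Fin d → ℝ, ⨆ s : S, |v s - phiDot Φ θ s|

/-- Membership in `Λ`: nonnegative and the `s₀`-block sums to one. -/
def InLambda (lam : Option (Fin m) × A → ℝ) : Prop :=
  (∀ p, 0 ≤ lam p) ∧ ∑ a, lam (none, a) = 1

/-- The CoreLP equality constraint `φ_{s₀}ᵀ + λᵀW(γP − E)Φ = 0ᵀ`. -/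
def CoreLPConstraint (γ : ℝ) (P : S → A → S → ℝ) (Φ : S → Fin d → ℝ) (s₀ : S)
    (c : Fin m → S) (lam : Option (Fin m) × A → ℝ) : Prop :=
  ∀ j : Fin d, Φ s₀ j + ∑ p : Option (Fin m) × A,
    lam p * (γ * (∑ s', P (splus s₀ c p.1) p.2 s' * Φ s' j) - Φ (splus s₀ c p.1) j) = 0

/-- The CoreLP objective `λᵀWr`. -/
noncomputable def CoreLPObj (r : S → A → ℝ) (s₀ : S) (c : Fin m → S)
    (lam : Option (Fin m) × A → ℝ) : ℝ :=
  ∑ p : Option (Fin m) × A, lam p * r (splus s₀ c p.1) p.2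

/-- The optimal value `V†` of CoreLP. -/
noncomputable def Vdagger (γ : ℝ) (P : S → A → S → ℝ) (r : S → A → ℝ)
    (Φ : S → Fin d → ℝ) (s₀ : S) (c : Fin m → S) : ℝ :=
  sSup {x : ℝ | ∃ lam : Option (Fin m) × A → ℝ,
    InLambda lam ∧ CoreLPConstraint γ P Φ s₀ c lam ∧ x = CoreLPObj r s₀ c lam}

/-- Feasibility for LRALP: `W*r + W*(γP − E)Φθ ≤ 0`. -/
def LRALPFeasible (γ : ℝ) (P : S → A → S → ℝ) (r : S → A → ℝ) (Φ : S → Fin d → ℝ)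
    (c : Fin m → S) (θ : Fin d → ℝ) : Prop :=
  ∀ (i : Fin m) (a : A),
    r (c i) a + (γ * (∑ s', P (c i) a s' * phiDot Φ θ s') - phiDot Φ θ (c i)) ≤ 0

/-- `V_LRALP(μ) = min { μᵀΦθ : θ feasible for LRALP }`. -/
noncomputable def VLRALP (γ : ℝ) (P : S → A → S → ℝ) (r : S → A → ℝ) (Φ : S → Fin d → ℝ)
    (c : Fin m → S) (μ : S → ℝ) : ℝ :=
  sInf {x : ℝ | ∃ θ : Fin d → ℝ, LRALPFeasible γ P r Φ c θ ∧ x = ∑ s, μ s * phiDot Φ θ s}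

/-- The Saddle CoreLP objective `f(λ,θ) = λᵀWr + φ_{s₀}ᵀθ + λᵀW(γP − E)Φθ`. -/
noncomputable def fObj (γ : ℝ) (P : S → A → S → ℝ) (r : S → A → ℝ) (Φ : S → Fin d → ℝ)
    (s₀ : S) (c : Fin m → S) (lam : Option (Fin m) × A → ℝ) (θ : Fin d → ℝ) : ℝ :=
  CoreLPObj r s₀ c lam + phiDot Φ θ s₀ +
    ∑ p : Option (Fin m) × A,
      lam p * (γ * (∑ s', P (splus s₀ c p.1) p.2 s' * phiDot Φ θ s') -
        phiDot Φ θ (splus s₀ c p.1))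

/-- The Saddle LRALP objective `g_μ(λ*,θ) = λ*ᵀW*r + μᵀΦθ + λ*ᵀW*(γP − E)Φθ`. -/
noncomputable def gObj (γ : ℝ) (P : S → A → S → ℝ) (r : S → A → ℝ) (Φ : S → Fin d → ℝ)
    (c : Fin m → S) (μ : S → ℝ) (lamS : Fin m × A → ℝ) (θ : Fin d → ℝ) : ℝ :=
  (∑ p : Fin m × A, lamS p * r (c p.1) p.2) + (∑ s, μ s * phiDot Φ θ s) +
    ∑ p : Fin m × A,
      lamS p * (γ * (∑ s', P (c p.1) p.2 s' * phiDot Φ θ s') - phiDot Φ θ (c p.1))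

/-- The `𝓑`-bounded duality gap `δ_𝓑(λ̂,θ̂) = max_{λ∈Λ_γ} f(λ,θ̂) − inf_{θ∈𝓑} f(λ̂,θ)`. -/
noncomputable def dualityGap (γ : ℝ) (P : S → A → S → ℝ) (r : S → A → ℝ)
    (Φ : S → Fin d → ℝ) (s₀ : S) (c : Fin m → S) (Bset : Set (Fin d → ℝ))
    (lamHat : Option (Fin m) × A → ℝ) (θHat : Fin d → ℝ) : ℝ :=
  sSup {x : ℝ | ∃ lam : Option (Fin m) × A → ℝ,
      InLambda lam ∧ (∑ p, |lam p|) = 1 / (1 - γ) ∧ x = fObj γ P r Φ s₀ c lam θHat} -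
    sInf {x : ℝ | ∃ θ ∈ Bset, x = fObj γ P r Φ s₀ c lamHat θ}

open Matrix

section StdSimplex

variable {ι κ : Type*} [Fintype ι] [Fintype κ]

lemma abs_dotProduct_le_sum_mul {p w : ι → ℝ} {ε : ℝ} (hp : 0 ≤ p) (hw : ∀ i, |w i| ≤ ε) :
    |p ⬝ᵥ w| ≤ (∑ i, p i) * ε := by
  rw [Finset.sum_mul]
  refine (Finset.abs_sum_le_sum_abs _ _).trans (Finset.sum_le_sum fun i _ => ?_)
  rw [abs_mul, abs_of_nonneg (hp i)]
  exact mul_le_mul_of_nonneg_left (hw i) (hp i)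

lemma abs_dotProduct_le_of_mem_stdSimplex {p w : ι → ℝ} {ε : ℝ} (hp : p ∈ stdSimplex ℝ ι)
    (hw : ∀ i, |w i| ≤ ε) : |p ⬝ᵥ w| ≤ ε := by
  simpa only [hp.2, one_mul] using abs_dotProduct_le_sum_mul hp.1 hw

lemma vecMul_mem_stdSimplex {p : ι → ℝ} {M : Matrix ι κ ℝ} (hp : p ∈ stdSimplex ℝ ι)
    (hM : ∀ i, M i ∈ stdSimplex ℝ κ) : p ᵥ* M ∈ stdSimplex ℝ κ := by
  refine ⟨fun k => Finset.sum_nonneg fun i _ => mul_nonneg (hp.1 i) ((hM i).1 k), ?_⟩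
  calc ∑ k, (p ᵥ* M) k = ∑ i, p i * ∑ k, M i k := by
        simp only [vecMul, dotProduct, Finset.mul_sum]
        exact Finset.sum_comm
    _ = 1 := by simp only [(hM _).2, mul_one, hp.2]

lemma mem_rowStochastic_iff_forall_mem_stdSimplex [DecidableEq ι] {M : Matrix ι ι ℝ} :
    M ∈ rowStochastic ℝ ι ↔ ∀ i, M i ∈ stdSimplex ℝ ι :=
  mem_rowStochastic_iff_sum.trans forall_and.symm

end StdSimplex

section Resolvent

attribute [local instance] Matrix.linftyOpNormedRing Matrix.linftyOpNormedAlgebra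

variable {n : Type*} [Fintype n] [DecidableEq n] {γ : ℝ} {K : Matrix n n ℝ}

lemma norm_le_one_of_mem_rowStochastic (hK : K ∈ rowStochastic ℝ n) : ‖K‖ ≤ 1 := by
  rw [linfty_opNorm_def, ← NNReal.coe_one, NNReal.coe_le_coe]
  refine Finset.sup_le fun i _ => NNReal.coe_le_coe.1 ?_
  simp only [NNReal.coe_sum, coe_nnnorm, NNReal.coe_one,
    Real.norm_of_nonneg (nonneg_of_mem_rowStochastic hK), sum_row_of_mem_rowStochastic hK, le_refl]

lemma norm_smul_lt_one_of_mem_rowStochastic (hγ0 : 0 ≤ γ) (hγ1 : γ < 1)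
    (hK : K ∈ rowStochastic ℝ n) : ‖γ • K‖ < 1 := by
  rw [norm_smul, Real.norm_of_nonneg hγ0]
  exact (mul_le_of_le_one_right hγ0 (norm_le_one_of_mem_rowStochastic hK)).trans_lt hγ1

lemma isUnit_det_one_sub_smul (hγ0 : 0 ≤ γ) (hγ1 : γ < 1) (hK : K ∈ rowStochastic ℝ n) :
    IsUnit (1 - γ • K).det :=
  (isUnit_iff_isUnit_det _).1
    (isUnit_one_sub_of_norm_lt_one (norm_smul_lt_one_of_mem_rowStochastic hγ0 hγ1 hK))

lemma hasSum_smul_pow (hγ0 : 0 ≤ γ) (hγ1 : γ < 1) (hK : K ∈ rowStochastic ℝ n) :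
    HasSum (fun t : ℕ => (γ • K) ^ t) (1 - γ • K)⁻¹ := by
  rw [nonsing_inv_eq_ringInverse]
  exact hasSum_geom_series_inverse _ (norm_smul_lt_one_of_mem_rowStochastic hγ0 hγ1 hK)

lemma hasSum_smul_pow_mulVec (hγ0 : 0 ≤ γ) (hγ1 : γ < 1) (hK : K ∈ rowStochastic ℝ n)
    (w : n → ℝ) : HasSum (fun t : ℕ => (γ • K) ^ t *ᵥ w) ((1 - γ • K)⁻¹ *ᵥ w) :=
  (hasSum_smul_pow hγ0 hγ1 hK).map (mulVec.addMonoidHomLeft w)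
    (continuous_id.matrix_mulVec continuous_const)

lemma inv_one_sub_smul_nonneg (hγ0 : 0 ≤ γ) (hγ1 : γ < 1) (hK : K ∈ rowStochastic ℝ n)
    (i j : n) : 0 ≤ (1 - γ • K)⁻¹ i j := by
  refine (Pi.hasSum.1 (Pi.hasSum.1 (hasSum_smul_pow hγ0 hγ1 hK) i) j).nonneg fun t => ?_
  rw [smul_pow]
  exact mul_nonneg (pow_nonneg hγ0 t) (nonneg_of_mem_rowStochastic (pow_mem hK t))

lemma inv_one_sub_smul_mulVec_le (hγ0 : 0 ≤ γ) (hγ1 : γ < 1) (hK : K ∈ rowStochastic ℝ n)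
    {b v : n → ℝ} (hb : b ≤ (1 - γ • K) *ᵥ v) : (1 - γ • K)⁻¹ *ᵥ b ≤ v := by
  intro i
  calc ((1 - γ • K)⁻¹ *ᵥ b) i ≤ ((1 - γ • K)⁻¹ *ᵥ (1 - γ • K) *ᵥ v) i :=
        dotProduct_le_dotProduct_of_nonneg_left hb (inv_one_sub_smul_nonneg hγ0 hγ1 hK i)
    _ = v i := by
        rw [mulVec_mulVec, nonsing_inv_mul _ (isUnit_det_one_sub_smul hγ0 hγ1 hK), one_mulVec]

lemma exists_nonneg_vecMul_one_sub_smul_eq (hγ0 : 0 ≤ γ) (hγ1 : γ < 1)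
    (hK : K ∈ rowStochastic ℝ n) {b : n → ℝ} (hb : 0 ≤ b) :
    ∃ x : n → ℝ, 0 ≤ x ∧ x ᵥ* (1 - γ • K) = b := by
  refine ⟨b ᵥ* (1 - γ • K)⁻¹, fun j => ?_, ?_⟩
  · exact dotProduct_nonneg_of_nonneg hb fun i => inv_one_sub_smul_nonneg hγ0 hγ1 hK i j
  · rw [vecMul_vecMul, nonsing_inv_mul _ (isUnit_det_one_sub_smul hγ0 hγ1 hK), vecMul_one]

end Resolvent

section Bellman

variable {S A : Type*} [Fintype S] {γ : ℝ} {P : S → A → S → ℝ} {r : S → A → ℝ}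

/-- The one-step lookahead `r_{sa} + γ P_{sa} v` of an arbitrary value function `v`; at `v = v*` it
is `q*`. -/
noncomputable def actionValue (γ : ℝ) (P : S → A → S → ℝ) (r : S → A → ℝ) (v : S → ℝ)
    (s : S) (a : A) : ℝ :=
  r s a + γ * (P s a ⬝ᵥ v)

lemma actionValue_le_add_dist (hγ0 : 0 ≤ γ) (hP : ∀ s a, P s a ∈ stdSimplex ℝ S) (u v : S → ℝ)
    (s : S) (a : A) : actionValue γ P r u s a ≤ actionValue γ P r v s a + γ * dist u v := by
  have hdiff : P s a ⬝ᵥ u - P s a ⬝ᵥ v ≤ dist u v := by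
    rw [← dotProduct_sub]
    exact (le_abs_self _).trans
      (abs_dotProduct_le_of_mem_stdSimplex (hP s a) fun i => dist_le_pi_dist u v i)
  unfold actionValue
  linarith [mul_le_mul_of_nonneg_left hdiff hγ0]

variable [Fintype A] [Nonempty A]

/-- The Bellman optimality operator `v ↦ max_a (r_{sa} + γ P_{sa} v)`. -/
noncomputable def bellmanOp (γ : ℝ) (P : S → A → S → ℝ) (r : S → A → ℝ) (v : S → ℝ) : S → ℝ :=
  fun s => Finset.univ.sup' Finset.univ_nonempty (actionValue γ P r v s)

lemma actionValue_le_bellmanOp (v : S → ℝ) (s : S) (a : A) :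
    actionValue γ P r v s a ≤ bellmanOp γ P r v s :=
  Finset.le_sup' _ (Finset.mem_univ a)

lemma exists_actionValue_eq_bellmanOp (v : S → ℝ) (s : S) :
    ∃ a, actionValue γ P r v s a = bellmanOp γ P r v s := by
  obtain ⟨a, -, ha⟩ := Finset.exists_mem_eq_sup' Finset.univ_nonempty (actionValue γ P r v s)
  exact ⟨a, ha.symm⟩

lemma bellmanOp_le_add_dist (hγ0 : 0 ≤ γ) (hP : ∀ s a, P s a ∈ stdSimplex ℝ S) (u v : S → ℝ)
    (s : S) : bellmanOp γ P r u s ≤ bellmanOp γ P r v s + γ * dist u v :=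
  Finset.sup'_le _ _ fun a _ => (actionValue_le_add_dist hγ0 hP u v s a).trans
    (add_le_add_left (actionValue_le_bellmanOp v s a) _)

lemma contractingWith_bellmanOp (hγ0 : 0 ≤ γ) (hγ1 : γ < 1) (hP : ∀ s a, P s a ∈ stdSimplex ℝ S) :
    ContractingWith ⟨γ, hγ0⟩ (bellmanOp γ P r) := by
  refine ⟨NNReal.coe_lt_coe.1 hγ1, LipschitzWith.of_dist_le_mul fun u v => ?_⟩
  refine (dist_pi_le_iff (mul_nonneg hγ0 dist_nonneg)).2 fun s => ?_
  rw [Real.dist_eq, abs_sub_le_iff]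
  have huv := bellmanOp_le_add_dist (r := r) hγ0 hP u v s
  have hvu := bellmanOp_le_add_dist (r := r) hγ0 hP v u s
  rw [dist_comm v u] at hvu
  exact ⟨sub_le_iff_le_add'.2 huv, sub_le_iff_le_add'.2 hvu⟩

end Bellman

section OptimalValue

variable {S A : Type} [Fintype A]

lemma isPolicy_single [DecidableEq A] (g : S → A) : IsPolicy fun s => Pi.single (g s) (1 : ℝ) :=
  forall_and.1 fun s => single_mem_stdSimplex ℝ (g s)

variable [Fintype S] {γ : ℝ} {P : S → A → S → ℝ} {r : S → A → ℝ} {π : S → A → ℝ} {v : S → ℝ}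

lemma rpi_add_smul_Ppi_mulVec (π : S → A → ℝ) (v : S → ℝ) :
    rpi r π + (γ • Ppi P π) *ᵥ v = fun s => π s ⬝ᵥ actionValue γ P r v s := by
  funext s
  have hnext : (Ppi P π *ᵥ v) s = π s ⬝ᵥ (of (P s) *ᵥ v) := (dotProduct_mulVec _ _ _).symm
  rw [Pi.add_apply, smul_mulVec, Pi.smul_apply, hnext, ← dotProduct_smul]
  exact (dotProduct_add _ _ _).symm

variable [DecidableEq S]

lemma Ppi_mem_rowStochastic (hP : ∀ s a, P s a ∈ stdSimplex ℝ S) (hπ : IsPolicy π) :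
    Ppi P π ∈ rowStochastic ℝ S :=
  mem_rowStochastic_iff_forall_mem_stdSimplex.2 fun s =>
    vecMul_mem_stdSimplex (p := π s) (M := of (P s)) ⟨hπ.1 s, hπ.2 s⟩ (hP s)

lemma vpi_eq_inv_mulVec (hγ0 : 0 ≤ γ) (hγ1 : γ < 1) (hP : ∀ s a, P s a ∈ stdSimplex ℝ S)
    (hπ : IsPolicy π) : vpi γ P r π = (1 - γ • Ppi P π)⁻¹ *ᵥ rpi r π :=
  (hasSum_smul_pow_mulVec hγ0 hγ1 (Ppi_mem_rowStochastic hP hπ) _).tsum_eq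

lemma rpi_eq_one_sub_mulVec_iff :
    rpi r π = (1 - γ • Ppi P π) *ᵥ v ↔ ∀ s, π s ⬝ᵥ actionValue γ P r v s = v s := by
  rw [sub_mulVec, one_mulVec, eq_sub_iff_add_eq, rpi_add_smul_Ppi_mulVec, funext_iff]

lemma rpi_le_one_sub_mulVec_iff :
    rpi r π ≤ (1 - γ • Ppi P π) *ᵥ v ↔ ∀ s, π s ⬝ᵥ actionValue γ P r v s ≤ v s := by
  rw [sub_mulVec, one_mulVec, le_sub_iff_add_le, rpi_add_smul_Ppi_mulVec, Pi.le_def]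

lemma vpi_le_of_forall_actionValue_le (hγ0 : 0 ≤ γ) (hγ1 : γ < 1)
    (hP : ∀ s a, P s a ∈ stdSimplex ℝ S) (hπ : IsPolicy π)
    (hv : ∀ s a, actionValue γ P r v s a ≤ v s) : vpi γ P r π ≤ v := by
  rw [vpi_eq_inv_mulVec hγ0 hγ1 hP hπ]
  refine inv_one_sub_smul_mulVec_le hγ0 hγ1 (Ppi_mem_rowStochastic hP hπ)
    (rpi_le_one_sub_mulVec_iff.2 fun s => ?_)
  calc π s ⬝ᵥ actionValue γ P r v s ≤ π s ⬝ᵥ fun _ => v s :=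
        dotProduct_le_dotProduct_of_nonneg_left (hv s) (hπ.1 s)
    _ = v s := by simp only [dotProduct, ← Finset.sum_mul, hπ.2, one_mul]

lemma vpi_eq_of_forall_dotProduct_actionValue_eq (hγ0 : 0 ≤ γ) (hγ1 : γ < 1)
    (hP : ∀ s a, P s a ∈ stdSimplex ℝ S) (hπ : IsPolicy π)
    (hv : ∀ s, π s ⬝ᵥ actionValue γ P r v s = v s) : vpi γ P r π = v := by
  rw [vpi_eq_inv_mulVec hγ0 hγ1 hP hπ, rpi_eq_one_sub_mulVec_iff.2 hv, mulVec_mulVec,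
    nonsing_inv_mul _ (isUnit_det_one_sub_smul hγ0 hγ1 (Ppi_mem_rowStochastic hP hπ)), one_mulVec]

lemma vstar_eq_of_bellmanOp_eq [Nonempty A] (hγ0 : 0 ≤ γ) (hγ1 : γ < 1)
    (hP : ∀ s a, P s a ∈ stdSimplex ℝ S) (hv : bellmanOp γ P r v = v) : vstar γ P r = v := by
  classical
  have hle (π : {π : S → A → ℝ // IsPolicy π}) : vpi γ P r π.1 ≤ v :=
    vpi_le_of_forall_actionValue_le hγ0 hγ1 hP π.2 fun s a =>
      (actionValue_le_bellmanOp v s a).trans_eq (congrFun hv s)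
  choose g hg using fun s => exists_actionValue_eq_bellmanOp (γ := γ) (P := P) (r := r) v s
  let greedy : {π : S → A → ℝ // IsPolicy π} := ⟨_, isPolicy_single g⟩
  have hgreedy : vpi γ P r greedy.1 = v :=
    vpi_eq_of_forall_dotProduct_actionValue_eq hγ0 hγ1 hP greedy.2 fun s => by
      rw [single_one_dotProduct, hg, hv]
  have : Nonempty {π : S → A → ℝ // IsPolicy π} := ⟨greedy⟩
  funext s
  refine le_antisymm (ciSup_le fun π => hle π s) ?_
  exact (congrFun hgreedy s).ge.trans
    (le_ciSup (f := fun π : {π : S → A → ℝ // IsPolicy π} => vpi γ P r π.1 s)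
      ⟨v s, Set.forall_mem_range.2 fun π => hle π s⟩ greedy)

theorem bellmanOp_vstar [Nonempty A] (hγ0 : 0 ≤ γ) (hγ1 : γ < 1)
    (hP : ∀ s a, P s a ∈ stdSimplex ℝ S) : bellmanOp γ P r (vstar γ P r) = vstar γ P r := by
  have hfix := (contractingWith_bellmanOp (r := r) hγ0 hγ1 hP).fixedPoint_isFixedPt
  rwa [vstar_eq_of_bellmanOp_eq hγ0 hγ1 hP hfix]

lemma qstar_le_vstar [Nonempty A] (hγ0 : 0 ≤ γ) (hγ1 : γ < 1)
    (hP : ∀ s a, P s a ∈ stdSimplex ℝ S) (s : S) (a : A) : qstar γ P r s a ≤ vstar γ P r s :=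
  (actionValue_le_bellmanOp _ s a).trans_eq (congrFun (bellmanOp_vstar hγ0 hγ1 hP) s)

lemma exists_qstar_eq_vstar [Nonempty A] (hγ0 : 0 ≤ γ) (hγ1 : γ < 1)
    (hP : ∀ s a, P s a ∈ stdSimplex ℝ S) (s : S) : ∃ a, qstar γ P r s a = vstar γ P r s := by
  obtain ⟨a, ha⟩ := exists_actionValue_eq_bellmanOp (γ := γ) (P := P) (r := r) (vstar γ P r) s
  exact ⟨a, ha.trans (congrFun (bellmanOp_vstar hγ0 hγ1 hP) s)⟩

end OptimalValue

lemma epsApprox_nonneg {S : Type} {d : ℕ} (Φ : S → Fin d → ℝ) (v : S → ℝ) : 0 ≤ epsApprox Φ v :=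
  Real.iInf_nonneg fun _ => Real.iSup_nonneg fun _ => abs_nonneg _

lemma sum_option_prod {ι κ M : Type*} [Fintype ι] [Fintype κ] [AddCommMonoid M]
    (f : Option ι × κ → M) : ∑ p, f p = ∑ a, f (none, a) + ∑ q : ι × κ, f (some q.1, q.2) := by
  simp only [Fintype.sum_prod_type, Fintype.sum_option]

section FlowDefect

variable {S A : Type} [Fintype S] [Fintype A] {d m : ℕ} {γ : ℝ} {P : S → A → S → ℝ}
  {Φ : S → Fin d → ℝ} {s₀ : S} {c : Fin m → S} {lam : Option (Fin m) × A → ℝ}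

/-- The linear functional `w ↦ w(s₀) + λᵀW(γP − E)w` on state functions, measuring by how much `λ`
violates flow conservation when tested against `w`. Defining it on all state functions, and not only
on the features, allows it to be evaluated at `v*`. -/
noncomputable def flowDefect (γ : ℝ) (P : S → A → S → ℝ) (s₀ : S) (c : Fin m → S)
    (lam : Option (Fin m) × A → ℝ) : (S → ℝ) →ₗ[ℝ] ℝ where
  toFun w := w s₀ + ∑ p : Option (Fin m) × A,
    lam p * (γ * (P (splus s₀ c p.1) p.2 ⬝ᵥ w) - w (splus s₀ c p.1))
  map_add' u w := by
    simp only [Pi.add_apply, dotProduct_add, mul_add, add_sub_add_comm, Finset.sum_add_distrib]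
    ring
  map_smul' k w := by
    simp only [Pi.smul_apply, dotProduct_smul, smul_eq_mul, RingHom.id_apply, mul_add,
      Finset.mul_sum]
    congr 1
    exact Finset.sum_congr rfl fun _ _ => by ring

lemma flowDefect_apply (w : S → ℝ) :
    flowDefect γ P s₀ c lam w = w s₀ + ∑ p : Option (Fin m) × A,
      lam p * (γ * (P (splus s₀ c p.1) p.2 ⬝ᵥ w) - w (splus s₀ c p.1)) :=
  rfl

lemma coreLPConstraint_iff_flowDefect_eq_zero :
    CoreLPConstraint γ P Φ s₀ c lam ↔ ∀ j, flowDefect γ P s₀ c lam (fun s => Φ s j) = 0 :=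
  Iff.rfl

lemma flowDefect_phiDot (h : CoreLPConstraint γ P Φ s₀ c lam) (θ : Fin d → ℝ) :
    flowDefect γ P s₀ c lam (phiDot Φ θ) = 0 := by
  have hspan : phiDot Φ θ = ∑ j, θ j • fun s => Φ s j := by
    funext s
    simp only [phiDot, Finset.sum_apply, Pi.smul_apply, smul_eq_mul, mul_comm]
  simp only [hspan, map_sum, map_smul, coreLPConstraint_iff_flowDefect_eq_zero.1 h, smul_zero,
    Finset.sum_const_zero]

lemma sum_eq_one_div_of_coreLPConstraint (hγ1 : γ < 1) (hP : ∀ s a, P s a ∈ stdSimplex ℝ S)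
    (hΦ : ∃ η, ∀ s, phiDot Φ η s = 1) (h : CoreLPConstraint γ P Φ s₀ c lam) :
    ∑ p, lam p = 1 / (1 - γ) := by
  obtain ⟨η, hη⟩ := hΦ
  have hone : flowDefect γ P s₀ c lam 1 = 0 := by
    rw [← flowDefect_phiDot h η, show phiDot Φ η = 1 from funext hη]
  simp only [flowDefect_apply, dotProduct_one, (hP _ _).2, Pi.one_apply, mul_one,
    ← Finset.sum_mul] at hone
  rw [eq_div_iff (sub_pos.2 hγ1).ne']
  linarith

/- The term `w(s₀)` cancels against the `s₀`-block, which is what makes the bounds below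
proportional to `γ`. -/
lemma flowDefect_eq_sub (h : ∑ a, lam (none, a) = 1) (w : S → ℝ) :
    flowDefect γ P s₀ c lam w =
      γ * (lam ⬝ᵥ fun p => P (splus s₀ c p.1) p.2 ⬝ᵥ w) -
        ((fun q : Fin m × A => lam (some q.1, q.2)) ⬝ᵥ fun q => w (c q.1)) := by
  have hmass : ∑ p : Option (Fin m) × A, lam p * w (splus s₀ c p.1) =
      w s₀ + ∑ q : Fin m × A, lam (some q.1, q.2) * w (c q.1) := by
    simp only [sum_option_prod, splus, Option.elim_none, Option.elim_some, ← Finset.sum_mul, h,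
      one_mul]
  simp only [flowDefect_apply, mul_sub, Finset.sum_sub_distrib, hmass, dotProduct, Finset.mul_sum,
    mul_left_comm γ]
  ring

lemma abs_flowDefect_le (hγ0 : 0 ≤ γ) (hγ1 : γ < 1) (hP : ∀ s a, P s a ∈ stdSimplex ℝ S)
    (hΦ : ∃ η, ∀ s, phiDot Φ η s = 1) (hlam : InLambda lam) (h : CoreLPConstraint γ P Φ s₀ c lam)
    {w : S → ℝ} {ε : ℝ} (hw : ∀ s, |w s| ≤ ε) :
    |flowDefect γ P s₀ c lam w| ≤ 2 * γ / (1 - γ) * ε := by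
  have hγ : 1 - γ ≠ 0 := (sub_pos.2 hγ1).ne'
  have htotal := sum_eq_one_div_of_coreLPConstraint hγ1 hP hΦ h
  have hcore : ∑ q : Fin m × A, lam (some q.1, q.2) = γ / (1 - γ) := by
    rw [sum_option_prod, hlam.2] at htotal
    rw [eq_sub_of_add_eq' htotal]
    field_simp
    ring
  have hnext := abs_dotProduct_le_sum_mul hlam.1 fun p =>
    abs_dotProduct_le_of_mem_stdSimplex (hP (splus s₀ c p.1) p.2) hw
  have hhere := abs_dotProduct_le_sum_mul (p := fun q : Fin m × A => lam (some q.1, q.2))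
    (fun q => hlam.1 _) fun q => hw (c q.1)
  rw [htotal] at hnext
  rw [hcore] at hhere
  rw [flowDefect_eq_sub hlam.2]
  calc |γ * _ - _| ≤ γ * |_| + |_| := by
        refine (abs_sub _ _).trans_eq ?_
        rw [abs_mul, abs_of_nonneg hγ0]
    _ ≤ γ * (1 / (1 - γ) * ε) + γ / (1 - γ) * ε :=
        add_le_add (mul_le_mul_of_nonneg_left hnext hγ0) hhere
    _ = 2 * γ / (1 - γ) * ε := by ring

lemma abs_flowDefect_le_epsApprox (hγ0 : 0 ≤ γ) (hγ1 : γ < 1)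
    (hP : ∀ s a, P s a ∈ stdSimplex ℝ S) (hΦ : ∃ η, ∀ s, phiDot Φ η s = 1) (hlam : InLambda lam)
    (h : CoreLPConstraint γ P Φ s₀ c lam) (v : S → ℝ) :
    |flowDefect γ P s₀ c lam v| ≤ 2 * γ / (1 - γ) * epsApprox Φ v := by
  have hγ : 0 ≤ 2 * γ / (1 - γ) := div_nonneg (by positivity) (sub_pos.2 hγ1).le
  rw [epsApprox, Real.mul_iInf_of_nonneg hγ]
  refine le_ciInf fun θ => ?_
  rw [← sub_zero (flowDefect γ P s₀ c lam v), ← flowDefect_phiDot h θ, ← map_sub]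
  exact abs_flowDefect_le hγ0 hγ1 hP hΦ hlam h fun s =>
    le_ciSup (f := fun s => |v s - phiDot Φ θ s|) (Set.finite_range _).bddAbove s

lemma sum_mul_sub_actionValue (r : S → A → ℝ) (v : S → ℝ) :
    ∑ p : Option (Fin m) × A,
        lam p * (v (splus s₀ c p.1) - actionValue γ P r v (splus s₀ c p.1) p.2) =
      v s₀ - CoreLPObj r s₀ c lam - flowDefect γ P s₀ c lam v := by
  simp only [actionValue, CoreLPObj, flowDefect_apply, mul_sub, mul_add, Finset.sum_sub_distrib,
    Finset.sum_add_distrib]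
  ring

lemma coreLPObj_add_flowDefect_le {r : S → A → ℝ} {v : S → ℝ} (hlam : InLambda lam)
    (hv : ∀ s a, actionValue γ P r v s a ≤ v s) :
    CoreLPObj r s₀ c lam + flowDefect γ P s₀ c lam v ≤
      ∑ a, lam (none, a) * actionValue γ P r v s₀ a := by
  have hgap := sum_mul_sub_actionValue (γ := γ) (P := P) (s₀ := s₀) (c := c) (lam := lam) r v
  have hcore : 0 ≤ ∑ q : Fin m × A, lam (some q.1, q.2) *
      (v (c q.1) - actionValue γ P r v (c q.1) q.2) :=
    Finset.sum_nonneg fun q _ => mul_nonneg (hlam.1 _) (sub_nonneg.2 (hv _ _))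
  rw [sum_option_prod] at hgap
  simp only [splus, Option.elim_none, Option.elim_some] at hgap
  have hplan : ∑ a, lam (none, a) * (v s₀ - actionValue γ P r v s₀ a) =
      v s₀ - ∑ a, lam (none, a) * actionValue γ P r v s₀ a := by
    simp only [mul_sub, Finset.sum_sub_distrib, ← Finset.sum_mul, hlam.2, one_mul]
  linarith

end FlowDefect

section DeterministicWeights

variable {S A : Type} {d m : ℕ} {γ : ℝ} {P : S → A → S → ℝ} {Φ : S → Fin d → ℝ} {s₀ : S}
  {c : Fin m → S} {Z : Matrix S (Fin m) ℝ}

lemma mem_stdSimplex_of_phiDot_eq_one (hZ0 : ∀ s i, 0 ≤ Z s i)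
    (hZ : ∀ s j, Φ s j = ∑ i, Z s i * Φ (c i) j) (hΦ : ∃ η, ∀ s, phiDot Φ η s = 1) (s : S) :
    Z s ∈ stdSimplex ℝ (Fin m) := by
  obtain ⟨η, hη⟩ := hΦ
  refine ⟨hZ0 s, ?_⟩
  calc ∑ i, Z s i = Z s ⬝ᵥ (of fun i => Φ (c i)) *ᵥ η := by
        rw [show (of fun i => Φ (c i)) *ᵥ η = 1 from funext fun i => hη (c i), dotProduct_one]
    _ = (Z s ᵥ* of fun i => Φ (c i)) ⬝ᵥ η := dotProduct_mulVec _ _ _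
    _ = Φ s ⬝ᵥ η := by
        rw [show (Z s ᵥ* of fun i => Φ (c i)) = Φ s from funext fun j => (hZ s j).symm]
    _ = 1 := hη s

/-- The transition matrix on core states obtained by taking the action of the deterministic policy
`g` and redistributing the next state over the core states according to `Z`. -/
def coreKernel [Fintype S] (P : S → A → S → ℝ) (c : Fin m → S) (Z : Matrix S (Fin m) ℝ)
    (g : S → A) : Matrix (Fin m) (Fin m) ℝ :=
  of fun i => P (c i) (g (c i)) ᵥ* Z

lemma coreKernel_mem_rowStochastic [Fintype S] (hP : ∀ s a, P s a ∈ stdSimplex ℝ S)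
    (hZ : ∀ s, Z s ∈ stdSimplex ℝ (Fin m)) (g : S → A) :
    coreKernel P c Z g ∈ rowStochastic ℝ (Fin m) :=
  mem_rowStochastic_iff_forall_mem_stdSimplex.2 fun _ => vecMul_mem_stdSimplex (hP _ _) hZ

variable [DecidableEq A]

/-- The weights `λ` putting mass `y o` on the state `splus s₀ c o`, all of it on the action chosen
there by the deterministic policy `g`. -/
def deterministicWeights (s₀ : S) (c : Fin m → S) (g : S → A) (y : Option (Fin m) → ℝ) :
    Option (Fin m) × A → ℝ :=
  fun p => (Pi.single (g (splus s₀ c p.1)) (y p.1) : A → ℝ) p.2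

variable [Fintype A]

lemma sum_deterministicWeights_mul (g : S → A) (y : Option (Fin m) → ℝ)
    (f : Option (Fin m) × A → ℝ) :
    ∑ p, deterministicWeights s₀ c g y p * f p = ∑ o, y o * f (o, g (splus s₀ c o)) := by
  rw [Fintype.sum_prod_type]
  exact Finset.sum_congr rfl fun o _ =>
    single_dotProduct (fun a => f (o, a)) (y o) (g (splus s₀ c o))

lemma inLambda_deterministicWeights (g : S → A) {x : Fin m → ℝ} (hx : 0 ≤ x) :
    InLambda (deterministicWeights s₀ c g fun o => o.elim 1 x) := by
  refine ⟨?_, Fintype.sum_pi_single' (g s₀) (1 : ℝ)⟩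
  have single_nonneg (b : A) {t : ℝ} (ht : 0 ≤ t) : 0 ≤ (Pi.single b t : A → ℝ) :=
    Pi.single_nonneg.2 ht
  rintro ⟨_ | i, a⟩
  · exact single_nonneg (g s₀) zero_le_one a
  · exact single_nonneg (g (c i)) (hx i) a

variable [Fintype S]

lemma coreLPObj_add_flowDefect_deterministicWeights {r : S → A → ℝ} {v : S → ℝ} {g : S → A}
    (hg : ∀ s, actionValue γ P r v s (g s) = v s) (y : Option (Fin m) → ℝ) :
    CoreLPObj r s₀ c (deterministicWeights s₀ c g y) +
      flowDefect γ P s₀ c (deterministicWeights s₀ c g y) v = v s₀ := by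
  have hgap := sum_mul_sub_actionValue (γ := γ) (P := P) (s₀ := s₀) (c := c)
    (lam := deterministicWeights s₀ c g y) r v
  simp only [sum_deterministicWeights_mul, hg, sub_self, mul_zero, Finset.sum_const_zero] at hgap
  linarith

lemma flowDefect_deterministicWeights (g : S → A) (x : Fin m → ℝ) {w : S → ℝ}
    (hw : w = Z *ᵥ (w ∘ c)) :
    flowDefect γ P s₀ c (deterministicWeights s₀ c g fun o => o.elim 1 x) w =
      (γ • (P s₀ (g s₀) ᵥ* Z) - x ᵥ* (1 - γ • coreKernel P c Z g)) ⬝ᵥ (w ∘ c) := by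
  have hnext (s : S) (a : A) : P s a ⬝ᵥ w = (P s a ᵥ* Z) ⬝ᵥ (w ∘ c) := by
    rw [← dotProduct_mulVec, ← hw]
  have hcore : ∑ i, x i * (γ * (P (c i) (g (c i)) ⬝ᵥ w) - w (c i)) =
      -((x ᵥ* (1 - γ • coreKernel P c Z g)) ⬝ᵥ (w ∘ c)) := by
    rw [← dotProduct_mulVec, ← dotProduct_neg, sub_mulVec, one_mulVec, smul_mulVec, neg_sub]
    exact Finset.sum_congr rfl fun i _ => by rw [hnext]; rfl
  rw [flowDefect_apply, sum_deterministicWeights_mul, Fintype.sum_option]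
  simp only [splus, Option.elim_none, Option.elim_some]
  rw [hcore, hnext, sub_dotProduct, smul_dotProduct, smul_eq_mul]
  ring

theorem exists_deterministicWeights_feasible (hγ0 : 0 ≤ γ) (hγ1 : γ < 1)
    (hP : ∀ s a, P s a ∈ stdSimplex ℝ S) (hΦ : ∃ η, ∀ s, phiDot Φ η s = 1)
    (hcore : ∃ Z : S → Fin m → ℝ, (∀ s i, 0 ≤ Z s i) ∧ ∀ s j, Φ s j = ∑ i, Z s i * Φ (c i) j)
    (s₀ : S) (g : S → A) :
    ∃ y : Option (Fin m) → ℝ, InLambda (deterministicWeights s₀ c g y) ∧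
      CoreLPConstraint γ P Φ s₀ c (deterministicWeights s₀ c g y) := by
  obtain ⟨Z, hZ0, hZ⟩ := hcore
  have hZ1 := mem_stdSimplex_of_phiDot_eq_one hZ0 hZ hΦ
  obtain ⟨x, hx, hxK⟩ := exists_nonneg_vecMul_one_sub_smul_eq hγ0 hγ1
    (coreKernel_mem_rowStochastic (c := c) hP hZ1 g)
    (smul_nonneg hγ0 (vecMul_mem_stdSimplex (hP s₀ (g s₀)) hZ1).1)
  refine ⟨_, inLambda_deterministicWeights g hx,
    coreLPConstraint_iff_flowDefect_eq_zero.2 fun j => ?_⟩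
  rw [flowDefect_deterministicWeights g x (funext fun s => hZ s j), hxK, sub_self, zero_dotProduct]

end DeterministicWeights

theorem corelp_maximizer_action_quality_general
    {S A : Type} [Fintype S] [Fintype A] [DecidableEq S] [Nonempty A]
    {d m : ℕ} (γ : ℝ) (hγ0 : 0 ≤ γ) (hγ1 : γ < 1)
    (P : S → A → S → ℝ) (hP0 : ∀ s a s', 0 ≤ P s a s')
    (hP1 : ∀ s a, ∑ s', P s a s' = 1)
    (r : S → A → ℝ)
    (Φ : S → Fin d → ℝ) (hfeat : ∃ η : Fin d → ℝ, ∀ s, phiDot Φ η s = 1)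
    (c : Fin m → S)
    (hcore : ∃ Z : S → Fin m → ℝ, (∀ s i, 0 ≤ Z s i) ∧
      ∀ s j, Φ s j = ∑ i, Z s i * Φ (c i) j)
    (s₀ : S)
    (lamDag : Option (Fin m) × A → ℝ)
    (hlam : InLambda lamDag) (hconstr : CoreLPConstraint γ P Φ s₀ c lamDag)
    (hmax : ∀ lam : Option (Fin m) × A → ℝ, InLambda lam →
      CoreLPConstraint γ P Φ s₀ c lam → CoreLPObj r s₀ c lam ≤ CoreLPObj r s₀ c lamDag) :
    vstar γ P r s₀ - ∑ a, lamDag (none, a) * qstar γ P r s₀ a ≤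
      4 * γ * epsApprox Φ (vstar γ P r) / (1 - γ) := by
  classical
  have hP (s : S) (a : A) : P s a ∈ stdSimplex ℝ S := ⟨hP0 s a, hP1 s a⟩
  choose g hg using exists_qstar_eq_vstar (r := r) hγ0 hγ1 hP
  obtain ⟨y, hlam', hconstr'⟩ := exists_deterministicWeights_feasible hγ0 hγ1 hP hfeat hcore s₀ g
  set lam' := deterministicWeights s₀ c g y
  let ρ := fun lam => flowDefect γ P s₀ c lam (vstar γ P r)
  have hobj : CoreLPObj r s₀ c lam' ≤ CoreLPObj r s₀ c lamDag := hmax lam' hlam' hconstr'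
  have hgreedy : CoreLPObj r s₀ c lam' + ρ lam' = vstar γ P r s₀ :=
    coreLPObj_add_flowDefect_deterministicWeights hg y
  have hdag : CoreLPObj r s₀ c lamDag + ρ lamDag ≤ ∑ a, lamDag (none, a) * qstar γ P r s₀ a :=
    coreLPObj_add_flowDefect_le hlam (qstar_le_vstar hγ0 hγ1 hP)
  have hρ' := abs_flowDefect_le_epsApprox hγ0 hγ1 hP hfeat hlam' hconstr' (vstar γ P r)
  have hρ := abs_flowDefect_le_epsApprox hγ0 hγ1 hP hfeat hlam hconstr (vstar γ P r)
  calc vstar γ P r s₀ - ∑ a, lamDag (none, a) * qstar γ P r s₀ a ≤ ρ lam' - ρ lamDag := by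
        linarith
    _ ≤ 2 * γ / (1 - γ) * epsApprox Φ (vstar γ P r) +
          2 * γ / (1 - γ) * epsApprox Φ (vstar γ P r) :=
        (le_abs_self _).trans ((abs_sub _ _).trans (add_le_add hρ' hρ))
    _ = 4 * γ * epsApprox Φ (vstar γ P r) / (1 - γ) := by ring

/-- a maximizer of CoreLP yields a near-optimal action distribution at `s₀`. -/
theorem corelp_maximizer_action_quality
    {S A : Type} [Fintype S] [Fintype A] [DecidableEq S] [Nonempty S] [Nonempty A]
    {d m : ℕ} (γ : ℝ) (hγ0 : 0 ≤ γ) (hγ1 : γ < 1)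
    (P : S → A → S → ℝ) (hP0 : ∀ s a s', 0 ≤ P s a s')
    (hP1 : ∀ s a, ∑ s', P s a s' = 1)
    (r : S → A → ℝ)
    (Φ : S → Fin d → ℝ) (hfeat : ∃ η : Fin d → ℝ, ∀ s, phiDot Φ η s = 1)
    (c : Fin m → S) (hc : Function.Injective c)
    (hcore : ∃ Z : S → Fin m → ℝ, (∀ s i, 0 ≤ Z s i) ∧
      ∀ s j, Φ s j = ∑ i, Z s i * Φ (c i) j)
    (s₀ : S)
    (lamDag : Option (Fin m) × A → ℝ)
    (hlam : InLambda lamDag) (hconstr : CoreLPConstraint γ P Φ s₀ c lamDag)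
    (hmax : ∀ lam : Option (Fin m) × A → ℝ, InLambda lam →
      CoreLPConstraint γ P Φ s₀ c lam → CoreLPObj r s₀ c lam ≤ CoreLPObj r s₀ c lamDag) :
    vstar γ P r s₀ - ∑ a, lamDag (none, a) * qstar γ P r s₀ a ≤
      20 * γ * epsApprox Φ (vstar γ P r) / (1 - γ) := by
  refine (corelp_maximizer_action_quality_general γ hγ0 hγ1 P hP0 hP1 r Φ hfeat c hcore s₀ lamDag
    hlam hconstr hmax).trans (div_le_div_of_nonneg_right ?_ (sub_nonneg.2 hγ1.le))
  linarith [mul_nonneg hγ0 (epsApprox_nonneg Φ (vstar γ P r))]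

end MDPPlan
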